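/- Let C = 1/(4·log₂(4/3)). For every c' with 0 < c' < C there exists ε₀ > 0 such that for every ε with 0 < ε < ε₀ there exist a positive integer n and a simple graph G on n vertices such that G contains fewer than ε^{c'·log₂(1/ε)} · n³ triangles, yet every set of edges of G that intersects every triangle of G has cardinality at least ε·n². (Equivalently, any valid δ(ε) in the triangle removal lemma satisfies δ(ε) ≤ ε^{(C−o(1))·log₂(1/ε)}.) -/

import Mathlib

/-!
Fix a positive definite quadratic form `Q` and a finite set `B` of lattice vectors. The tripartite
graph whose triangles are the zero-sum triples `(x, y, z)` in `B` with `Q (x - z) = r` has no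
accidental triangles: the edges of any triangle put `2x + y`, `x - z` and `y + 2z` on the level set
`Q = r`, and `2x + y` and `y + 2z` are the sum and the difference of `x + y + z` and `x - z`, so the
parallelogram identity forces `Q (x + y + z) = 0`. Its triangles are therefore edge-disjoint, and
some level `r` retains a large share of the zero-sum triples.

Take for `B` the `k`-th power of the set of integer points of a ball of radius `R` in dimension `D`.
The proportion of pairs `(x, y)` in the ball for which `-(x + y)` is also in the ball is about
`(√3 / 2) ^ D`, since the two balls centred at `0` and `-x` with `‖x‖ ≈ R` meet in roughly a ball
of radius `√3 / 2 * R`. With `R` slightly smaller than `ε ^ (-1 / 4)` and `k` a suitable multiple of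
`log (1 / ε)`, at least `ε n²` edge-disjoint triangles remain on `n = 3 #B ^ k` vertices, while
edge-disjointness caps their number at `n²`, so that `1 / n` bounds the triangle density.
-/

open Filter Finset MeasureTheory Metric Module SimpleGraph Topology
open scoped Pointwise RealInnerProductSpace

/-! ### Edge-disjoint triangles from zero-sum triples -/

/-- Pairs in `A × A` encoding the triples `(x, y, z)` of elements of `S` with `x + y + z = 0`:
the third element is `-(x + y)`. -/
def zeroSumPairs {A : Type*} [AddCommGroup A] (S : Set A) : Set (A × A) :=
  {p | p.1 ∈ S ∧ p.2 ∈ S ∧ -(p.1 + p.2) ∈ S}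

section Graph

variable {R M N : Type*} [CommRing R] [AddCommGroup M] [Module R M] [AddCommGroup N] [Module R N]

lemma quadraticMap_parallelogram (Q : QuadraticMap R M N) (x y : M) :
    Q (x + y) + Q (x - y) = 2 • (Q x + Q y) := by
  rw [sub_eq_add_neg, QuadraticMap.map_add Q x y, QuadraticMap.map_add Q x (-y), Q.map_neg,
    Q.polar_neg_right, two_nsmul]
  abel

lemma ncard_zeroSumPairs_le (B : Finset M) : (zeroSumPairs (B : Set M)).ncard ≤ #B ^ 2 := by
  rw [sq, ← card_product, ← Set.ncard_coe_finset, coe_product]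
  exact Set.ncard_le_ncard fun p hp => ⟨hp.1, hp.2.1⟩

variable [DecidableEq M]

/-- The triples of elements of `B` with sum zero, as a finset. -/
def zeroSumTriples (B : Finset M) : Finset (B × B × B) :=
  {t | (t.1 + t.2.1 + t.2.2 : M) = 0}

lemma mem_zeroSumTriples {B : Finset M} {x y z : B} :
    (x, y, z) ∈ zeroSumTriples B ↔ (x + y + z : M) = 0 := by
  simp [zeroSumTriples]

lemma card_zeroSumTriples (B : Finset M) :
    #(zeroSumTriples B) = (zeroSumPairs (B : Set M)).ncard := by
  rw [← Set.ncard_coe_finset]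
  refine Set.ncard_congr (fun t _ => ((t.1 : M), (t.2.1 : M))) ?_ ?_ ?_
  · rintro ⟨x, y, z⟩ h
    have h_third : -(x + y : M) = z := neg_eq_of_add_eq_zero_right (mem_zeroSumTriples.1 h)
    exact ⟨x.2, y.2, h_third ▸ z.2⟩
  · rintro ⟨x, y, z⟩ ⟨x', y', z'⟩ h h' heq
    obtain ⟨hx, hy⟩ : (x : M) = x' ∧ (y : M) = y' := Prod.mk.inj heq
    have hz : (z : M) = z' := add_left_cancel <|
      (mem_zeroSumTriples.1 h).trans (hx ▸ hy ▸ (mem_zeroSumTriples.1 h').symm)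
    rw [Subtype.ext hx, Subtype.ext hy, Subtype.ext hz]
  · rintro ⟨x, y⟩ ⟨hx, hy, hz⟩
    exact ⟨(⟨x, hx⟩, ⟨y, hy⟩, ⟨_, hz⟩), mem_zeroSumTriples.2 (add_neg_cancel _), rfl⟩

variable [DecidableEq N]

/-- The zero-sum triples `(x, y, z)` of `B` on the level set `Q (x - z) = r`; they index the
triangles of the removal-lemma graph. -/
def levelTriples (Q : QuadraticMap R M N) (B : Finset M) (r : N) : Finset (B × B × B) :=
  {t ∈ zeroSumTriples B | Q (t.1 - t.2.2) = r}

namespace levelTriples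

variable {Q : QuadraticMap R M N} {B : Finset M} {r : N}

lemma mem_iff {x y z : B} :
    (x, y, z) ∈ levelTriples Q B r ↔ (x + y + z : M) = 0 ∧ Q (x - z) = r := by
  simp [levelTriples, zeroSumTriples]

instance explicitDisjoint : TripartiteFromTriangles.ExplicitDisjoint (levelTriples Q B r) where
  inj₀ x y z x' h h' := Subtype.ext <| by grind [mem_iff]
  inj₁ x y z y' h h' := Subtype.ext <| by grind [mem_iff]
  inj₂ x y z z' h h' := Subtype.ext <| by grind [mem_iff]

lemma noAccidental [IsAddTorsionFree N] (hQ : Q.Anisotropic) :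
    TripartiteFromTriangles.NoAccidental (levelTriples Q B r) where
  eq_or_eq_or_eq x x' y y' z z' hx' hy' hz' := by
    obtain ⟨hx'_sum, hx'_level⟩ := mem_iff.1 hx'
    obtain ⟨-, hy'_level⟩ := mem_iff.1 hy'
    obtain ⟨hz'_sum, hz'_level⟩ := mem_iff.1 hz'
    have h_add : (x - z' : M) = (x + y + z) + (x - z) := by
      rw [eq_neg_of_add_eq_zero_right hz'_sum]; abel
    have h_sub : (x' - z : M) = -((x + y + z) - (x - z)) := by
      rw [eq_neg_of_add_eq_zero_left ((add_assoc _ _ _).symm.trans hx'_sum)]; abel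
    have h_level := quadraticMap_parallelogram Q (x + y + z : M) (x - z)
    rw [← h_add, ← Q.map_neg ((x + y + z : M) - (x - z)), ← h_sub, hz'_level, hx'_level,
      hy'_level, ← two_nsmul] at h_level
    have h_sum : (x + y + z : M) = 0 := hQ _ <| left_eq_add.1 <|
      add_comm (Q _) r ▸ IsAddTorsionFree.nsmul_right_injective two_ne_zero h_level
    exact .inr <| .inr <| Subtype.ext <| add_left_cancel (h_sum.trans hz'_sum.symm)

lemma card_le : #(levelTriples Q B r) ≤ #B ^ 2 :=
  (card_filter_le _ _).trans <| (card_zeroSumTriples B).trans_le (ncard_zeroSumPairs_le B)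

end levelTriples

end Graph

section PosDef

variable {M : Type*} [AddCommGroup M] {Q : QuadraticMap ℤ M ℤ}

lemma quadraticMap_sub_le {m : ℤ} {x y : M} (hQ : 0 ≤ Q (x + y)) (hx : Q x ≤ m) (hy : Q y ≤ m) :
    Q (x - y) ≤ 4 * m := by
  have h_par := quadraticMap_parallelogram Q x y
  rw [two_nsmul] at h_par
  linarith

variable [DecidableEq M] in
lemma exists_le_card_levelTriples (hQ : Q.PosDef) {B : Finset M} {m : ℕ} (hm : ∀ x ∈ B, Q x ≤ m) :
    ∃ r, (zeroSumPairs (B : Set M)).ncard ≤ (4 * m + 1) * #(levelTriples Q B r) := by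
  have h_maps : ∀ t ∈ zeroSumTriples B, Q (t.1 - t.2.2) ∈ Icc 0 (4 * m : ℤ) := fun t _ =>
    mem_Icc.2 ⟨hQ.nonneg _, quadraticMap_sub_le (hQ.nonneg _) (hm _ t.1.2) (hm _ t.2.2.2)⟩
  obtain ⟨r, -, hr⟩ := exists_max_image (Icc 0 (4 * m : ℤ)) (fun r => #(levelTriples Q B r))
    (nonempty_Icc.2 (by positivity))
  have h_card : #(Icc 0 (4 * m : ℤ)) = 4 * m + 1 := by rw [Int.card_Icc]; lia
  use r
  rw [← card_zeroSumTriples, mul_comm, ← h_card]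
  exact card_le_mul_card_image_of_maps_to h_maps _ hr

theorem exists_edgeDisjointTriangles (hQ : Q.PosDef) {B : Finset M} {m : ℕ}
    (hm : ∀ x ∈ B, Q x ≤ m) :
    ∃ G : SimpleGraph (Fin (3 * #B)), G.EdgeDisjointTriangles ∧
      (G.cliqueSet 3).ncard ≤ #B ^ 2 ∧
      (zeroSumPairs (B : Set M)).ncard ≤ (4 * m + 1) * (G.cliqueSet 3).ncard := by
  classical
  obtain ⟨r, hr⟩ := exists_le_card_levelTriples hQ hm
  have := levelTriples.noAccidental (B := B) (r := r) hQ.anisotropic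
  let G := TripartiteFromTriangles.graph (levelTriples Q B r)
  have h_vertices : Fintype.card (B ⊕ B ⊕ B) = 3 * #B := by
    simp only [Fintype.card_sum, Fintype.card_coe]; ring
  let e := (Fintype.equivFinOfCardEq h_vertices).toEmbedding
  have h_card : ((G.map e).cliqueSet 3).ncard = #(levelTriples Q B r) := by
    rw [← coe_cliqueFinset, Set.ncard_coe_finset, cliqueFinset_map _ _ (by norm_num), card_map,
      TripartiteFromTriangles.card_triangles]
  refine ⟨G.map e, (TripartiteFromTriangles.locallyLinear _).edgeDisjointTriangles.map e, ?_, ?_⟩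
  · exact h_card.trans_le levelTriples.card_le
  · rwa [h_card]

end PosDef

lemma ncard_cliqueSet_three_le_of_hits {V : Type*} [Finite V] {G : SimpleGraph V}
    (hG : G.EdgeDisjointTriangles) {F : Set (Sym2 V)}
    (hF : ∀ t ∈ G.cliqueSet 3, ∃ u ∈ t, ∃ v ∈ t, u ≠ v ∧ s(u, v) ∈ F) :
    (G.cliqueSet 3).ncard ≤ F.ncard := by
  classical
  cases nonempty_fintype V
  rw [Set.ncard_eq_toFinset_card', Set.ncard_eq_toFinset_card']
  refine card_le_card_of_forall_subsingleton (fun t e => ¬ e.IsDiag ∧ e ∈ t.sym2)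
    (fun t ht => ?_) fun e _ t ht t' ht' => ?_
  · obtain ⟨u, hu, v, hv, huv, h_mem⟩ := hF t (Set.mem_toFinset.1 ht)
    exact ⟨s(u, v), Set.mem_toFinset.2 h_mem, by simpa, mk_mem_sym2_iff.2 ⟨hu, hv⟩⟩
  · exact edgeDisjointTriangles_iff_mem_sym2_subsingleton.1 hG ht.2.1
      ⟨Set.mem_toFinset.1 ht.1, ht.2.2⟩ ⟨Set.mem_toFinset.1 ht'.1, ht'.2.2⟩

lemma zeroSumPairs_pi {ι A : Type*} [AddCommGroup A] (S : Set A) :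
    zeroSumPairs (Set.univ.pi fun _ : ι => S) =
      Equiv.arrowProdEquivProdArrow ι (fun _ => A) (fun _ => A) ''
        Set.univ.pi fun _ => zeroSumPairs S := by
  ext p
  rw [Equiv.image_eq_preimage_symm]
  simp only [zeroSumPairs, Set.mem_pi, Set.mem_univ, true_imp_iff, Set.mem_preimage,
    Set.mem_ofPred_eq, ← forall_and]
  rfl

lemma ncard_zeroSumPairs_pi {ι A : Type*} [Fintype ι] [AddCommGroup A] (S : Set A) :
    (zeroSumPairs (Set.univ.pi fun _ : ι => S)).ncard =
      (zeroSumPairs S).ncard ^ Fintype.card ι := by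
  rw [zeroSumPairs_pi, Set.ncard_image_of_injective _ (Equiv.injective _), Set.ncard,
    Set.encard_pi_eq_prod_encard, prod_const, card_univ]
  exact map_pow ENat.toNatHom _ _

/-- Passing to the `k`-th power `B ^ k` only multiplies the number of level sets by about `k`,
whereas the triples are counted with exponent `k`. -/
theorem exists_edgeDisjointTriangles_pow {M : Type*} [AddCommGroup M] {Q : QuadraticMap ℤ M ℤ}
    (hQ : Q.PosDef) {B : Finset M} {m : ℕ} (hm : ∀ x ∈ B, Q x ≤ m) (k : ℕ) :
    ∃ G : SimpleGraph (Fin (3 * #B ^ k)), G.EdgeDisjointTriangles ∧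
      (G.cliqueSet 3).ncard ≤ (#B ^ k) ^ 2 ∧
      (zeroSumPairs (B : Set M)).ncard ^ k ≤ (4 * (k * m) + 1) * (G.cliqueSet 3).ncard := by
  classical
  have h_le : ∀ x ∈ Fintype.piFinset fun _ : Fin k => B,
      QuadraticMap.pi (fun _ => Q) x ≤ (k * m : ℕ) := fun x hx => by
    rw [QuadraticMap.pi_apply]
    simpa using sum_le_card_nsmul univ _ _ fun i _ => hm _ (Fintype.mem_piFinset.1 hx i)
  have h_graph := exists_edgeDisjointTriangles (QuadraticMap.posDef_pi_iff.2 fun _ => hQ) h_le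
  rwa [Fintype.coe_piFinset, ncard_zeroSumPairs_pi, Fintype.card_fin,
    Fintype.card_piFinset_const] at h_graph

/-! ### Zero-sum pairs in the Euclidean ball -/

section ZeroSumPairs

variable {A : Type*} [AddCommGroup A]

lemma zeroSumPairs_subset_prod (S : Set A) : zeroSumPairs S ⊆ S ×ˢ S := fun _ hp =>
  ⟨hp.1, hp.2.1⟩

lemma convex_zeroSumPairs [Module ℝ A] {S : Set A} (hS : Convex ℝ S) :
    Convex ℝ (zeroSumPairs S) :=
  (hS.linear_preimage (LinearMap.fst ℝ A A)).inter <|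
    (hS.linear_preimage (LinearMap.snd ℝ A A)).inter <|
    hS.linear_preimage (-(LinearMap.fst ℝ A A + LinearMap.snd ℝ A A))

variable [TopologicalSpace A] [ContinuousAdd A] [ContinuousNeg A]

lemma isClosed_zeroSumPairs {S : Set A} (hS : IsClosed S) : IsClosed (zeroSumPairs S) :=
  (hS.preimage continuous_fst).inter <| (hS.preimage continuous_snd).inter <|
    hS.preimage (by fun_prop)

lemma isCompact_zeroSumPairs [T2Space A] {S : Set A} (hS : IsCompact S) :
    IsCompact (zeroSumPairs S) :=
  (hS.prod hS).of_isClosed_subset (isClosed_zeroSumPairs hS.isClosed) (zeroSumPairs_subset_prod S)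

end ZeroSumPairs

lemma norm_smul_add_smul_le_one {E : Type*} [NormedAddCommGroup E] [InnerProductSpace ℝ E]
    {x w : E} (hx : ‖x‖ ≤ 1) (hw : ‖w‖ ≤ 1) {c s η : ℝ} (hc : |c| = 1 / 2) (hs : 0 ≤ s)
    (hwx : |⟪w, x⟫| ≤ η) (hsη : 1 / 4 + s ^ 2 + s * η ≤ 1) :
    ‖c • x + s • w‖ ≤ 1 := by
  have h_sq : ‖c • x + s • w‖ ^ 2 = |c| ^ 2 * ‖x‖ ^ 2 + 2 * c * (s * ⟪w, x⟫) + s ^ 2 * ‖w‖ ^ 2 := by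
    rw [norm_add_sq_real, norm_smul, norm_smul, real_inner_smul_left, real_inner_smul_right,
      real_inner_comm, Real.norm_eq_abs, Real.norm_eq_abs, mul_pow, mul_pow, sq_abs s]
    ring
  have h_inner : 2 * c * (s * ⟪w, x⟫) ≤ s * η := by
    calc 2 * c * (s * ⟪w, x⟫) ≤ |2 * c * (s * ⟪w, x⟫)| := le_abs_self _
      _ = s * |⟪w, x⟫| := by rw [abs_mul, abs_mul, abs_mul, hc, abs_two, abs_of_nonneg hs]; ring
      _ ≤ s * η := by gcongr
  have hx_sq : ‖x‖ ^ 2 ≤ 1 := pow_le_one₀ (norm_nonneg x) hx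
  have hw_sq : s ^ 2 * ‖w‖ ^ 2 ≤ s ^ 2 :=
    mul_le_of_le_one_right (sq_nonneg s) (pow_le_one₀ (norm_nonneg w) hw)
  rw [← sq_le_one_iff₀ (norm_nonneg _), h_sq, hc]
  linarith

section Ball

variable {E : Type*} [NormedAddCommGroup E] [InnerProductSpace ℝ E] [FiniteDimensional ℝ E]
  [MeasurableSpace E] [BorelSpace E]

lemma setIntegral_closedBall_inner_sq_eq_of_norm_eq {v w : E} (h : ‖v‖ = ‖w‖) (r : ℝ) :
    ∫ x in closedBall (0 : E) r, ⟪x, v⟫ ^ 2 = ∫ x in closedBall (0 : E) r, ⟪x, w⟫ ^ 2 := by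
  let ρ : E ≃ₗᵢ[ℝ] E := (Submodule.span ℝ {w - v})ᗮ.reflection
  have hρ : ρ w = v := Submodule.reflection_sub h.symm
  have h_ball : ρ ⁻¹' closedBall 0 r = closedBall 0 r := by
    rw [ρ.preimage_closedBall, map_zero]
  rw [← ρ.measurePreserving.setIntegral_preimage_emb ρ.toHomeomorph.measurableEmbedding, h_ball]
  simp only [← hρ, LinearIsometryEquiv.inner_map_map]

lemma integrableOn_closedBall_inner_sq (v : E) (r : ℝ) :
    IntegrableOn (fun x => ⟪x, v⟫ ^ 2) (closedBall (0 : E) r) :=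
  ContinuousOn.integrableOn_compact (isCompact_closedBall _ _) (by fun_prop)

lemma finrank_mul_setIntegral_closedBall_inner_sq (v : E) (r : ℝ) :
    finrank ℝ E * ∫ x in closedBall (0 : E) r, ⟪x, v⟫ ^ 2 =
      ‖v‖ ^ 2 * ∫ x in closedBall (0 : E) r, ‖x‖ ^ 2 := by
  let b := stdOrthonormalBasis ℝ E
  have h_coord (i) : ∫ x in closedBall (0 : E) r, ⟪x, v⟫ ^ 2 =
      ‖v‖ ^ 2 * ∫ x in closedBall (0 : E) r, ⟪x, b i⟫ ^ 2 := by
    rw [setIntegral_closedBall_inner_sq_eq_of_norm_eq (w := ‖v‖ • b i)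
      (by simp [norm_smul, b.norm_eq_one]), ← integral_const_mul]
    simp only [inner_smul_right, mul_pow]
  calc finrank ℝ E * ∫ x in closedBall (0 : E) r, ⟪x, v⟫ ^ 2
      = ∑ i, ‖v‖ ^ 2 * ∫ x in closedBall (0 : E) r, ⟪x, b i⟫ ^ 2 := by
        simp only [← h_coord, sum_const, card_univ, Fintype.card_fin, nsmul_eq_mul]
    _ = ‖v‖ ^ 2 * ∫ x in closedBall (0 : E) r, ∑ i, ⟪x, b i⟫ ^ 2 := by
        rw [integral_finsetSum _ fun i _ => integrableOn_closedBall_inner_sq _ _, mul_sum]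
    _ = ‖v‖ ^ 2 * ∫ x in closedBall (0 : E) r, ‖x‖ ^ 2 := by
        simp only [b.sum_sq_inner_left]

lemma finrank_mul_setIntegral_closedBall_inner_sq_le {v : E} (hv : ‖v‖ ≤ 1) :
    finrank ℝ E * ∫ x in closedBall (0 : E) 1, ⟪x, v⟫ ^ 2 ≤
      volume.real (closedBall (0 : E) 1) := by
  have h_sq {x : E} (hx : ‖x‖ ≤ 1) : ‖x‖ ^ 2 ≤ 1 := pow_le_one₀ (norm_nonneg x) hx
  have h_int : ∫ x in closedBall (0 : E) 1, ‖x‖ ^ 2 ≤ volume.real (closedBall (0 : E) 1) := by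
    refine (Real.le_norm_self _).trans ?_
    have := norm_setIntegral_le_of_norm_le_const (μ := volume) (C := 1)
      (measure_closedBall_lt_top (x := (0 : E)) (r := 1)) fun x hx =>
      (Real.norm_of_nonneg (sq_nonneg ‖x‖)).trans_le (h_sq (mem_closedBall_zero_iff.1 hx))
    rwa [one_mul] at this
  rw [finrank_mul_setIntegral_closedBall_inner_sq]
  exact (mul_le_of_le_one_left (integral_nonneg fun _ => sq_nonneg _) (h_sq hv)).trans h_int

lemma volume_lt_abs_inner_le_half_volume_closedBall {v : E} (hv : ‖v‖ ≤ 1) {η : ℝ} (hη : 0 < η)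
    (h_dim : 2 ≤ finrank ℝ E * η ^ 2) :
    volume.real (closedBall (0 : E) 1 ∩ {x | η < |⟪x, v⟫|}) ≤
      volume.real (closedBall (0 : E) 1) / 2 := by
  have h_markov := mul_meas_ge_le_integral_of_nonneg (ae_of_all _ fun x => sq_nonneg ⟪x, v⟫)
    (integrableOn_closedBall_inner_sq v 1) (η ^ 2)
  rw [measureReal_restrict_apply' measurableSet_closedBall] at h_markov
  have h_mono : volume.real (closedBall (0 : E) 1 ∩ {x | η < |⟪x, v⟫|}) ≤
      volume.real ({x | η ^ 2 ≤ ⟪x, v⟫ ^ 2} ∩ closedBall (0 : E) 1) :=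
    measureReal_mono (fun x hx => ⟨sq_le_sq.2 ((abs_of_pos hη).trans_le hx.2.le), hx.1⟩)
      (measure_ne_top_of_subset Set.inter_subset_right measure_closedBall_lt_top.ne)
  rw [le_div_iff₀' two_pos]
  calc 2 * volume.real (closedBall (0 : E) 1 ∩ {x | η < |⟪x, v⟫|})
      ≤ (finrank ℝ E * η ^ 2) *
          volume.real ({x | η ^ 2 ≤ ⟪x, v⟫ ^ 2} ∩ closedBall (0 : E) 1) := by
        gcongr
    _ ≤ finrank ℝ E * ∫ x in closedBall (0 : E) 1, ⟪x, v⟫ ^ 2 := by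
        rw [mul_assoc]
        gcongr
    _ ≤ volume.real (closedBall (0 : E) 1) := finrank_mul_setIntegral_closedBall_inner_sq_le hv

lemma half_volume_closedBall_le_volume_abs_inner_le {v : E} (hv : ‖v‖ ≤ 1) {η : ℝ} (hη : 0 < η)
    (h_dim : 2 ≤ finrank ℝ E * η ^ 2) :
    volume.real (closedBall (0 : E) 1) / 2 ≤
      volume.real (closedBall (0 : E) 1 ∩ {x | |⟪x, v⟫| ≤ η}) := by
  have h_meas : MeasurableSet {x : E | |⟪x, v⟫| ≤ η} :=
    (isClosed_le (by fun_prop) (by fun_prop)).measurableSet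
  have h_compl : {x : E | |⟪x, v⟫| ≤ η}ᶜ = {x | η < |⟪x, v⟫|} := by
    ext; simp only [Set.mem_compl_iff, Set.mem_ofPred_eq, not_le]
  have h_split := measureReal_inter_add_sdiff (μ := volume) (s := closedBall (0 : E) 1) h_meas
    measure_closedBall_lt_top.ne
  rw [Set.sdiff_eq, h_compl] at h_split
  linarith [volume_lt_abs_inner_le_half_volume_closedBall hv hη h_dim]

/-- The intersection contains the points `-x / 2 + s • w` with `w` in the unit ball and nearly
orthogonal to `x`; in high dimension most `w` are. -/
lemma le_volume_closedBall_inter_closedBall_neg {x : E} (hx : ‖x‖ ≤ 1) {s η : ℝ} (hs : 0 < s)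
    (hη : 0 < η) (hsη : 1 / 4 + s ^ 2 + s * η ≤ 1) (h_dim : 2 ≤ finrank ℝ E * η ^ 2) :
    s ^ finrank ℝ E / 2 * volume.real (closedBall (0 : E) 1) ≤
      volume.real (closedBall (0 : E) 1 ∩ closedBall (-x) 1) := by
  let T := closedBall (0 : E) 1 ∩ {w | |⟪w, x⟫| ≤ η}
  have h_sub : (fun w => -(1 / 2 : ℝ) • x + w) '' (s • T) ⊆
      closedBall (0 : E) 1 ∩ closedBall (-x) 1 := by
    rintro _ ⟨_, ⟨w, ⟨hw, hwx⟩, rfl⟩, rfl⟩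
    have h_norm (c : ℝ) (hc : |c| = 1 / 2) : ‖c • x + s • w‖ ≤ 1 :=
      norm_smul_add_smul_le_one hx (mem_closedBall_zero_iff.1 hw) hc hs.le hwx hsη
    have h_shift : -(1 / 2 : ℝ) • x + s • w - -x = (1 / 2 : ℝ) • x + s • w := by module
    refine ⟨mem_closedBall_zero_iff.2 (h_norm _ (by norm_num [abs_of_pos])), ?_⟩
    rw [mem_closedBall, dist_eq_norm, h_shift]
    exact h_norm _ (by norm_num [abs_of_pos])
  calc s ^ finrank ℝ E / 2 * volume.real (closedBall (0 : E) 1)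
      = s ^ finrank ℝ E * (volume.real (closedBall (0 : E) 1) / 2) := by ring
    _ ≤ s ^ finrank ℝ E * volume.real T := by
        gcongr
        exact half_volume_closedBall_le_volume_abs_inner_le hx hη h_dim
    _ = volume.real ((fun w => -(1 / 2 : ℝ) • x + w) '' (s • T)) := by
        rw [Set.image_add_left, measureReal_def, measureReal_def, measure_preimage_add,
          Measure.addHaar_smul_of_nonneg _ hs.le, ENNReal.toReal_mul,
          ENNReal.toReal_ofReal (by positivity)]
    _ ≤ volume.real (closedBall (0 : E) 1 ∩ closedBall (-x) 1) :=
        measureReal_mono h_sub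
          (measure_ne_top_of_subset Set.inter_subset_left measure_closedBall_lt_top.ne)

lemma le_volume_zeroSumPairs_closedBall {s η : ℝ} (hs : 0 < s) (hη : 0 < η)
    (hsη : 1 / 4 + s ^ 2 + s * η ≤ 1) (h_dim : 2 ≤ finrank ℝ E * η ^ 2) :
    s ^ finrank ℝ E / 2 * volume.real (closedBall (0 : E) 1) ^ 2 ≤
      volume.real (zeroSumPairs (closedBall (0 : E) 1)) := by
  set β := closedBall (0 : E) 1
  have h_compact : IsCompact (zeroSumPairs β) := isCompact_zeroSumPairs (isCompact_closedBall _ _)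
  have h_slice : ∀ x ∈ β, ENNReal.ofReal (s ^ finrank ℝ E / 2 * volume.real β) ≤
      volume (Prod.mk x ⁻¹' zeroSumPairs β) := by
    intro x hx
    have h_eq : Prod.mk x ⁻¹' zeroSumPairs β = β ∩ closedBall (-x) 1 := by
      ext y
      have h_third : ‖-(x + y)‖ = ‖y - -x‖ := by rw [norm_neg, sub_neg_eq_add, add_comm]
      simp only [zeroSumPairs, Set.mem_preimage, Set.mem_ofPred_eq, Set.mem_inter_iff, β,
        mem_closedBall_iff_norm, sub_zero, h_third]
      exact and_iff_right (mem_closedBall_zero_iff.1 hx)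
    rw [h_eq]
    exact ENNReal.ofReal_le_of_le_toReal
      (le_volume_closedBall_inter_closedBall_neg (mem_closedBall_zero_iff.1 hx) hs hη hsη h_dim)
  refine (ENNReal.ofReal_le_iff_le_toReal h_compact.measure_ne_top).1 ?_
  calc ENNReal.ofReal (s ^ finrank ℝ E / 2 * volume.real β ^ 2)
      = ∫⁻ _ in β, ENNReal.ofReal (s ^ finrank ℝ E / 2 * volume.real β) := by
        rw [setLIntegral_const, ← ofReal_measureReal measure_closedBall_lt_top.ne,
          ← ENNReal.ofReal_mul (by positivity), mul_assoc, ← sq]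
    _ ≤ ∫⁻ x in β, volume (Prod.mk x ⁻¹' zeroSumPairs β) :=
        setLIntegral_mono' measurableSet_closedBall h_slice
    _ ≤ ∫⁻ x, volume (Prod.mk x ⁻¹' zeroSumPairs β) := setLIntegral_le_lintegral _ _
    _ = volume (zeroSumPairs β) := (Measure.prod_apply h_compact.measurableSet).symm

end Ball

/-! ### Lattice points -/

section Lattice

variable {ι : Type*}

/-- The integer vectors `x` with `x / n ∈ s`, that is, the lattice points of the dilate `n • s`
when `n ≠ 0`. -/
def latticePoints (s : Set (ι → ℝ)) (n : ℕ) : Set (ι → ℤ) :=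
  {x | (fun i => (x i : ℝ) / n) ∈ s}

lemma image_latticePoints [Finite ι] (s : Set (ι → ℝ)) {n : ℕ} (hn : n ≠ 0) :
    (fun x i => (x i : ℝ) / n) '' latticePoints s n =
      s ∩ (n : ℝ)⁻¹ • (Submodule.span ℤ (Set.range (Pi.basisFun ℝ ι)) : Set (ι → ℝ)) := by
  have hn' : (n : ℝ) ≠ 0 := Nat.cast_ne_zero.2 hn
  ext y
  rw [Set.mem_inter_iff, Set.mem_inv_smul_set_iff₀ hn', SetLike.mem_coe,
    Basis.mem_span_iff_repr_mem]
  simp only [Pi.basisFun_repr, Pi.smul_apply, smul_eq_mul, algebraMap_int_eq, Set.mem_range,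
    eq_intCast]
  constructor
  · rintro ⟨x, hx, rfl⟩
    exact ⟨hx, fun i => ⟨x i, (mul_div_cancel₀ _ hn').symm⟩⟩
  · rintro ⟨hy, h_int⟩
    choose x hx using h_int
    have h_eq : (fun i => (x i : ℝ) / n) = y := funext fun i => by
      rw [hx, mul_div_cancel_left₀ _ hn']
    exact ⟨x, by rwa [← h_eq] at hy, h_eq⟩

lemma ncard_latticePoints [Finite ι] (s : Set (ι → ℝ)) {n : ℕ} (hn : n ≠ 0) :
    (latticePoints s n).ncard = Nat.card
      ↑(s ∩ (n : ℝ)⁻¹ • (Submodule.span ℤ (Set.range (Pi.basisFun ℝ ι)) : Set (ι → ℝ))) := by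
  rw [← image_latticePoints s hn, Nat.card_coe_set_eq, Set.ncard_image_of_injective]
  exact fun x y h => funext fun i => Int.cast_injective <|
    (div_left_inj' (Nat.cast_ne_zero.2 hn)).1 (congrFun h i)

lemma tendsto_ncard_latticePoints_div_pow [Fintype ι] {K : Set (ι → ℝ)} (hK : IsCompact K)
    (hK_convex : Convex ℝ K) :
    Tendsto (fun n : ℕ => ((latticePoints K n).ncard : ℝ) / n ^ Fintype.card ι) atTop
      (𝓝 (volume.real K)) := by
  refine (tendsto_card_div_pow_atTop_volume K hK.isBounded hK.measurableSet
    (hK_convex.addHaar_frontier volume)).congr' ?_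
  filter_upwards [eventually_ne_atTop 0] with n hn
  rw [ncard_latticePoints K hn]

lemma ncard_zeroSumPairs_latticePoints (s : Set (ι → ℝ)) (n : ℕ) :
    (zeroSumPairs (latticePoints s n)).ncard =
      (latticePoints (Equiv.sumPiEquivProdPi (fun _ => ℝ) ⁻¹' zeroSumPairs s) n).ncard := by
  rw [← Set.ncard_image_of_injective _ (Equiv.sumPiEquivProdPi fun _ : ι ⊕ ι => ℤ).symm.injective,
    Equiv.image_symm_eq_preimage]
  congr 1
  ext x
  have h_third : (fun i => ((-(x (.inl i) + x (.inr i)) : ℤ) : ℝ) / n) =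
      -((fun i => (x (.inl i) : ℝ) / n) + fun i => (x (.inr i) : ℝ) / n) := by
    ext i
    simp only [Int.cast_neg, Int.cast_add, neg_div, add_div, Pi.neg_apply, Pi.add_apply]
  simp only [latticePoints, zeroSumPairs, Set.mem_preimage, Set.mem_ofPred_eq]
  exact and_congr_right' <| and_congr_right' <| iff_of_eq <| congrArg (· ∈ s) h_third

lemma tendsto_ncard_zeroSumPairs_latticePoints_div_pow [Fintype ι] {K : Set (ι → ℝ)}
    (hK : IsCompact K) (hK_convex : Convex ℝ K) :
    Tendsto (fun n : ℕ => ((zeroSumPairs (latticePoints K n)).ncard : ℝ) /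
      (n ^ Fintype.card ι) ^ 2) atTop (𝓝 (volume.real (zeroSumPairs K))) := by
  let e := ContinuousLinearEquiv.sumPiEquivProdPi ℝ ι ι fun _ => ℝ
  have h_compact : IsCompact (e ⁻¹' zeroSumPairs K) :=
    e.toHomeomorph.isCompact_preimage.2 (isCompact_zeroSumPairs hK)
  have h_convex : Convex ℝ (e ⁻¹' zeroSumPairs K) :=
    (convex_zeroSumPairs hK_convex).linear_preimage e.toLinearMap
  have h_volume : volume.real (e ⁻¹' zeroSumPairs K) = volume.real (zeroSumPairs K) :=
    (volume_measurePreserving_sumPiEquivProdPi fun _ : ι ⊕ ι => ℝ).measureReal_preimage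
      (isCompact_zeroSumPairs hK).measurableSet.nullMeasurableSet
  rw [← h_volume]
  refine (tendsto_ncard_latticePoints_div_pow h_compact h_convex).congr fun n => ?_
  rw [ncard_zeroSumPairs_latticePoints, Fintype.card_sum, ← two_mul, mul_comm, pow_mul]
  rfl

lemma eventually_mul_ncard_latticePoints_sq_le [Fintype ι] {K : Set (ι → ℝ)}
    (hK : IsCompact K) (hK_convex : Convex ℝ K) {c : ℝ}
    (hc : c * volume.real K ^ 2 < volume.real (zeroSumPairs K)) :
    ∀ᶠ n : ℕ in atTop, c * ((latticePoints K n).ncard : ℝ) ^ 2 ≤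
      (zeroSumPairs (latticePoints K n)).ncard := by
  have h_card := ((tendsto_ncard_latticePoints_div_pow hK hK_convex).pow 2).const_mul c
  have h_lt := h_card.eventually_lt
    (tendsto_ncard_zeroSumPairs_latticePoints_div_pow hK hK_convex) hc
  filter_upwards [h_lt, eventually_ne_atTop 0] with n h hn
  rw [div_pow, mul_div_assoc', div_lt_div_iff_of_pos_right (by positivity)] at h
  exact h.le

end Lattice

section EuclideanBall

/-- The closed Euclidean unit ball as a subset of `ι → ℝ`, the type in which lattice points are
counted; the norm of `ι → ℝ` itself is the sup norm. -/
def euclideanUnitBall (ι : Type*) [Fintype ι] : Set (ι → ℝ) :=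
  WithLp.toLp 2 ⁻¹' closedBall (0 : EuclideanSpace ℝ ι) 1

variable {ι : Type*} [Fintype ι]

lemma convex_euclideanUnitBall : Convex ℝ (euclideanUnitBall ι) :=
  (convex_closedBall (0 : EuclideanSpace ℝ ι) 1).linear_preimage
    (WithLp.linearEquiv 2 ℝ (ι → ℝ)).symm.toLinearMap

lemma isCompact_euclideanUnitBall : IsCompact (euclideanUnitBall ι) :=
  (PiLp.homeomorph 2 fun _ : ι => ℝ).symm.isCompact_preimage.2 (isCompact_closedBall _ _)

lemma volume_euclideanUnitBall : volume.real (euclideanUnitBall ι) =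
    volume.real (closedBall (0 : EuclideanSpace ℝ ι) 1) :=
  (PiLp.volume_preserving_toLp ι).measureReal_preimage measurableSet_closedBall.nullMeasurableSet

lemma volume_euclideanUnitBall_pos : 0 < volume.real (euclideanUnitBall ι) := by
  rw [volume_euclideanUnitBall]
  exact ENNReal.toReal_pos (measure_closedBall_pos _ _ one_pos).ne' measure_closedBall_lt_top.ne

lemma volume_zeroSumPairs_euclideanUnitBall : volume.real (zeroSumPairs (euclideanUnitBall ι)) =
    volume.real (zeroSumPairs (closedBall (0 : EuclideanSpace ℝ ι) 1)) :=
  ((PiLp.volume_preserving_toLp ι).prod (PiLp.volume_preserving_toLp ι)).measureReal_preimage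
    (isCompact_zeroSumPairs (isCompact_closedBall _ _)).measurableSet.nullMeasurableSet

lemma mem_latticePoints_euclideanUnitBall {n : ℕ} (hn : n ≠ 0) {x : ι → ℤ} :
    x ∈ latticePoints (euclideanUnitBall ι) n ↔ ∑ i, x i * x i ≤ (n : ℤ) ^ 2 := by
  simp only [latticePoints, euclideanUnitBall, Set.mem_preimage, Set.mem_ofPred_eq,
    mem_closedBall_zero_iff, ← sq_le_one_iff₀ (norm_nonneg _), EuclideanSpace.real_norm_sq_eq,
    div_pow, ← sum_div, ← sq]
  rw [div_le_one (by positivity)]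
  exact_mod_cast Iff.rfl

lemma eventually_pow_mul_volume_euclideanUnitBall_sq_lt {κ : ℝ} (hκ : 0 < κ)
    (hκ_lt : κ ^ 2 < 3 / 4) :
    ∀ᶠ D : ℕ in atTop, κ ^ D * volume.real (euclideanUnitBall (Fin D)) ^ 2 <
      volume.real (zeroSumPairs (euclideanUnitBall (Fin D))) := by
  obtain ⟨s, hκs, hs_lt⟩ : ∃ s, κ < s ∧ s < √(3 / 4) :=
    exists_between ((Real.lt_sqrt hκ.le).2 hκ_lt)
  have hs : 0 < s := hκ.trans hκs
  have hs_sq : s ^ 2 < 3 / 4 := (Real.lt_sqrt hs.le).1 hs_lt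
  let η := (3 / 4 - s ^ 2) / s
  have hη : 0 < η := div_pos (sub_pos.2 hs_sq) hs
  have hsη : 1 / 4 + s ^ 2 + s * η ≤ 1 := by
    rw [mul_div_cancel₀ _ hs.ne']
    linarith
  have h_dim : ∀ᶠ D : ℕ in atTop, 2 ≤ D * η ^ 2 :=
    (tendsto_natCast_atTop_atTop.atTop_mul_const (by positivity)).eventually_ge_atTop 2
  have h_pow : ∀ᶠ D : ℕ in atTop, (κ / s) ^ D < 1 / 2 :=
    (tendsto_pow_atTop_nhds_zero_of_lt_one (by positivity)
      ((div_lt_one hs).2 hκs)).eventually_lt_const (by norm_num)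
  filter_upwards [h_dim, h_pow] with D h_dim h_pow
  have h_volume := volume_euclideanUnitBall_pos (ι := Fin D)
  have h_slice := le_volume_zeroSumPairs_closedBall (E := EuclideanSpace ℝ (Fin D)) hs hη hsη
    (by rwa [finrank_euclideanSpace_fin])
  rw [finrank_euclideanSpace_fin, ← volume_euclideanUnitBall,
    ← volume_zeroSumPairs_euclideanUnitBall] at h_slice
  refine lt_of_lt_of_le ?_ h_slice
  rw [div_pow, div_lt_iff₀ (by positivity)] at h_pow
  gcongr
  linarith

theorem exists_eventually_le_ncard_zeroSumPairs {κ : ℝ} (hκ : 0 < κ) (hκ_lt : κ ^ 2 < 3 / 4) :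
    ∃ (D : ℕ) (b : ℝ), 0 < D ∧ 0 < b ∧ ∀ᶠ R : ℕ in atTop, ∃ B : Finset (Fin D → ℤ),
      b * R ^ D ≤ #B ∧ (∀ x ∈ B, ∑ i, x i * x i ≤ (R : ℤ) ^ 2) ∧
      κ ^ D * #B ^ 2 ≤ (zeroSumPairs (B : Set (Fin D → ℤ))).ncard := by
  obtain ⟨D, h_volume, hD⟩ := ((eventually_pow_mul_volume_euclideanUnitBall_sq_lt hκ hκ_lt).and
    (eventually_gt_atTop 0)).exists
  let K := euclideanUnitBall (Fin D)
  have hK_pos : 0 < volume.real K := volume_euclideanUnitBall_pos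
  have h_card := (tendsto_ncard_latticePoints_div_pow isCompact_euclideanUnitBall
    convex_euclideanUnitBall).eventually_const_lt (half_lt_self hK_pos)
  have h_pairs := eventually_mul_ncard_latticePoints_sq_le isCompact_euclideanUnitBall
    convex_euclideanUnitBall h_volume
  refine ⟨D, volume.real K / 2, hD, half_pos hK_pos, ?_⟩
  filter_upwards [h_card, h_pairs, eventually_ne_atTop 0] with R h_card h_pairs hR
  rw [Fintype.card_fin, lt_div_iff₀ (by positivity)] at h_card
  obtain ⟨B, hB⟩ : ∃ B : Finset (Fin D → ℤ), (B : Set (Fin D → ℤ)) = latticePoints K R :=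
    (Set.finite_of_ncard_pos <| Nat.cast_pos.1 <| h_card.trans' <| by positivity).exists_finset_coe
  rw [← hB, Set.ncard_coe_finset] at h_card h_pairs
  exact ⟨B, h_card.le, fun x hx => (mem_latticePoints_euclideanUnitBall hR).1 (hB ▸ hx), h_pairs⟩

end EuclideanBall

/-! ### Choice of parameters -/

lemma exists_edgeDisjointTriangles_sq_card_le {M : Type*} [AddCommGroup M]
    {Q : QuadraticMap ℤ M ℤ} (hQ : Q.PosDef) {B : Finset M} {m : ℕ} (hm : ∀ x ∈ B, Q x ≤ m)
    {δ : ℝ} (hδ : 0 ≤ δ) (h_pairs : δ * #B ^ 2 ≤ (zeroSumPairs (B : Set M)).ncard)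
    {k : ℕ} {N : ℝ} (hN : 9 * (4 * (k * m) + 1) ≤ N * δ ^ k) :
    ∃ G : SimpleGraph (Fin (3 * #B ^ k)), G.EdgeDisjointTriangles ∧
      (G.cliqueSet 3).ncard ≤ (#B ^ k) ^ 2 ∧
      ((3 * #B ^ k : ℕ) : ℝ) ^ 2 ≤ N * (G.cliqueSet 3).ncard := by
  obtain ⟨G, hG, h_le, h_pow⟩ := exists_edgeDisjointTriangles_pow hQ hm k
  refine ⟨G, hG, h_le, ?_⟩
  have h_levels : (0 : ℝ) < 4 * (k * m) + 1 := by positivity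
  have hN_pos : 0 < N :=
    pos_of_mul_pos_left ((mul_pos (by norm_num) h_levels).trans_le hN) (pow_nonneg hδ k)
  refine le_of_mul_le_mul_left ?_ h_levels
  calc (4 * (k * m) + 1) * ((3 * #B ^ k : ℕ) : ℝ) ^ 2
      = 9 * (4 * (k * m) + 1) * (#B ^ 2) ^ k := by push_cast; ring
    _ ≤ N * δ ^ k * (#B ^ 2) ^ k := by gcongr
    _ = N * (δ * #B ^ 2) ^ k := by rw [mul_assoc, mul_pow]
    _ ≤ N * (zeroSumPairs (B : Set M)).ncard ^ k := by gcongr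
    _ ≤ N * ((4 * (k * m) + 1) * (G.cliqueSet 3).ncard) := by gcongr; exact_mod_cast h_pow
    _ = (4 * (k * m) + 1) * (N * (G.cliqueSet 3).ncard) := mul_left_comm _ _ _

/-- The squared Euclidean norm as an integral quadratic form. -/
def sumSquares (ι : Type*) [Fintype ι] : QuadraticMap ℤ (ι → ℤ) ℤ :=
  QuadraticMap.pi fun _ => QuadraticMap.sq

section SumSquares

variable {ι : Type*} [Fintype ι]

lemma sumSquares_apply (x : ι → ℤ) : sumSquares ι x = ∑ i, x i * x i :=
  QuadraticMap.pi_apply _ x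

lemma posDef_sumSquares : (sumSquares ι).PosDef :=
  QuadraticMap.posDef_pi_iff.2 fun _ _ hx => mul_self_pos.2 hx

end SumSquares

section Asymptotics

lemma eventually_le_two_rpow {f u : ℝ → ℝ} {p q : ℝ} (hf : Tendsto (fun x => f x / x) atTop (𝓝 p))
    (hu : Tendsto (fun x => u x / x) atTop (𝓝 q)) (hq : 0 < q) :
    ∀ᶠ x in atTop, f x ≤ 2 ^ u x := by
  have h_exp : ∀ᶠ x : ℝ in atTop, p + 1 ≤ 2 ^ (q / 2 * x) / x := by
    have h_atTop := tendsto_exp_mul_div_rpow_atTop 1 (Real.log 2 * (q / 2)) (by positivity)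
    filter_upwards [h_atTop.eventually_ge_atTop (p + 1)] with x hx
    rwa [Real.rpow_one, mul_assoc, ← Real.rpow_def_of_pos two_pos] at hx
  filter_upwards [hf.eventually_lt_const (lt_add_one p), hu.eventually_const_lt (half_lt_self hq),
    h_exp, eventually_gt_atTop 0] with x hfx hux hx hx_pos
  calc f x ≤ (p + 1) * x := ((div_lt_iff₀ hx_pos).1 hfx).le
    _ ≤ 2 ^ (q / 2 * x) := (le_div_iff₀ hx_pos).1 hx
    _ ≤ 2 ^ u x := Real.rpow_le_rpow_of_exponent_le one_le_two ((lt_div_iff₀ hx_pos).1 hux).le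

lemma exists_lt_two_rpow_neg_eq {L₀ ε : ℝ} (hε : 0 < ε) (hε_lt : ε < 2 ^ (-L₀)) :
    ∃ L, L₀ < L ∧ (2 : ℝ) ^ (-L) = ε :=
  ⟨-Real.logb 2 ε, lt_neg_of_lt_neg ((Real.logb_lt_iff_lt_rpow one_lt_two hε).2 hε_lt), by
    rw [neg_neg, Real.rpow_logb two_pos (by norm_num) hε]⟩

lemma two_rpow_neg_rpow_mul_logb (c L : ℝ) :
    ((2 : ℝ) ^ (-L)) ^ (c * Real.logb 2 (1 / 2 ^ (-L))) = (2 ^ (c * L ^ 2))⁻¹ := by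
  rw [one_div, Real.logb_inv, Real.logb_rpow two_pos (by norm_num), neg_neg,
    ← Real.rpow_mul zero_le_two, ← Real.rpow_neg zero_le_two]
  ring_nf

lemma sq_lt_two_rpow_neg_rpow_mul_cube {c L V : ℝ} (hV : 2 ^ (c * L ^ 2) < V) :
    V ^ 2 < ((2 : ℝ) ^ (-L)) ^ (c * Real.logb 2 (1 / 2 ^ (-L))) * (3 * V) ^ 3 := by
  have hV_pos : 0 < V := hV.trans' (by positivity)
  rw [two_rpow_neg_rpow_mul_logb, ← div_eq_inv_mul, lt_div_iff₀ (by positivity)]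
  calc V ^ 2 * 2 ^ (c * L ^ 2) < V ^ 2 * V := by gcongr
    _ = V ^ 3 := (pow_succ V 2).symm
    _ ≤ (3 * V) ^ 3 := by gcongr; linarith

variable {m k : ℝ → ℕ} {γ μ : ℝ}

lemma eventually_level_count_le (hm : Tendsto (fun x => m x / x) atTop (𝓝 γ))
    (hk : Tendsto (fun x => k x / x) atTop (𝓝 μ)) {a : ℝ} (h : a * μ + 2 * γ < 1) :
    ∀ᶠ x in atTop, (9 * (4 * (k x * ((2 ^ m x) ^ 2 : ℕ)) + 1) : ℝ) ≤ 2 ^ x * (2 ^ (-a)) ^ k x := by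
  have h_inv : Tendsto (fun x : ℝ => x⁻¹) atTop (𝓝 0) := tendsto_inv_atTop_zero
  have h_linear : Tendsto (fun x => 9 * (4 * k x + 1) / x) atTop (𝓝 (9 * (4 * μ + 0))) := by
    refine (((hk.const_mul 4).add h_inv).const_mul 9).congr fun x => by ring
  have h_exponent : Tendsto (fun x => (x - a * k x - 2 * m x) / x) atTop
      (𝓝 (1 - a * μ - 2 * γ)) := by
    refine (((hk.const_mul a).const_sub 1).sub (hm.const_mul 2)).congr' ?_
    filter_upwards [eventually_ne_atTop 0] with x hx
    field_simp
  filter_upwards [eventually_le_two_rpow h_linear h_exponent (by linarith)] with x hx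
  have h_one : (1 : ℝ) ≤ (2 ^ m x) ^ 2 :=
    one_le_pow₀ (one_le_pow₀ one_le_two)
  calc (9 * (4 * (k x * ((2 ^ m x) ^ 2 : ℕ)) + 1) : ℝ)
      ≤ 9 * (4 * k x + 1) * (2 ^ m x) ^ 2 := by push_cast; linarith
    _ ≤ 2 ^ (x - a * k x - 2 * m x) * (2 ^ m x) ^ 2 := by gcongr
    _ = 2 ^ x * (2 ^ (-a)) ^ k x := by
        rw [← Real.rpow_mul_natCast zero_le_two, ← pow_mul, ← Real.rpow_natCast,
          ← Real.rpow_add two_pos, ← Real.rpow_add two_pos]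
        push_cast
        ring_nf

lemma eventually_two_rpow_lt_pow (hm : Tendsto (fun x => m x / x) atTop (𝓝 γ))
    (hk : Tendsto (fun x => k x / x) atTop (𝓝 μ)) {b c : ℝ} (hb : 0 < b) {D : ℕ}
    (h : c < μ * (D * γ)) :
    ∀ᶠ x in atTop, (2 : ℝ) ^ (c * x ^ 2) < (b * (2 ^ m x : ℕ) ^ D) ^ k x := by
  have h_ratio : Tendsto (fun x => k x / x * (D * (m x / x) + Real.logb 2 b / x)) atTop
      (𝓝 (μ * (D * γ + 0))) :=
    hk.mul <| (hm.const_mul _).add <| tendsto_const_nhds.div_atTop tendsto_id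
  rw [add_zero] at h_ratio
  filter_upwards [h_ratio.eventually_const_lt h, eventually_gt_atTop 0] with x hx hx_pos
  have h_log : Real.logb 2 ((b * (2 ^ m x : ℕ) ^ D) ^ k x) = k x * (D * m x + Real.logb 2 b) := by
    rw [Real.logb_pow, Real.logb_mul hb.ne' (by positivity), Real.logb_pow, Nat.cast_pow,
      Real.logb_pow, Nat.cast_two, Real.logb_self_eq_one one_lt_two, mul_one, add_comm]
  rw [← Real.lt_logb_iff_rpow_lt one_lt_two (by positivity), h_log]
  calc c * x ^ 2 < k x / x * (D * (m x / x) + Real.logb 2 b / x) * x ^ 2 := by gcongr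
    _ = k x * (D * m x + Real.logb 2 b) := by field_simp

end Asymptotics

lemma exists_exponents {c : ℝ} (hc : 0 < c) (hc_lt : c < 1 / (4 * Real.logb 2 (4 / 3))) :
    ∃ a γ, 0 < a ∧ 0 < γ ∧ Real.logb 2 (4 / 3) < 2 * a ∧ 2 * a * c < γ ∧ γ < 1 / 4 := by
  have h_log : 0 < Real.logb 2 (4 / 3) := Real.logb_pos one_lt_two (by norm_num)
  rw [lt_div_iff₀ (by positivity)] at hc_lt
  obtain ⟨t, ht_gt, ht_lt⟩ : ∃ t, Real.logb 2 (4 / 3) < t ∧ t < 1 / (4 * c) :=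
    exists_between <| (lt_div_iff₀ (by positivity)).2 (by linarith)
  have ht : 0 < t := h_log.trans ht_gt
  rw [lt_div_iff₀ (by positivity)] at ht_lt
  obtain ⟨γ, hγ_gt, hγ_lt⟩ : ∃ γ, t * c < γ ∧ γ < 1 / 4 := exists_between (by linarith)
  refine ⟨t / 2, γ, half_pos ht, (mul_pos ht hc).trans hγ_gt, ?_, ?_, hγ_lt⟩ <;>
  rwa [mul_div_cancel₀ _ two_ne_zero]

/-- The ball has radius `R ≈ 2 ^ (γ * L)` and the number of tensor factors is
`k ≈ L / (2 * a * D)`: then `2 ^ L * 2 ^ (-a * D * k) ≈ 2 ^ (L / 2)` beats the number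
`≈ k * R ^ 2` of level sets because `γ < 1 / 4`, while
`#B ^ k ≈ R ^ (D * k) ≈ 2 ^ (γ / (2 * a) * L ^ 2)` and `c < γ / (2 * a)`. -/
theorem eventually_exists_edgeDisjointTriangles {c : ℝ} (hc : 0 < c)
    (hc_lt : c < 1 / (4 * Real.logb 2 (4 / 3))) :
    ∀ᶠ L : ℝ in atTop, ∃ (V : ℕ) (G : SimpleGraph (Fin (3 * V))), G.EdgeDisjointTriangles ∧
      (G.cliqueSet 3).ncard ≤ V ^ 2 ∧ (2 : ℝ) ^ (c * L ^ 2) < V ∧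
      ((3 * V : ℕ) : ℝ) ^ 2 ≤ 2 ^ L * (G.cliqueSet 3).ncard := by
  obtain ⟨a, γ, ha, hγ, ha_gt, hγ_gt, hγ_lt⟩ := exists_exponents hc hc_lt
  have hκ : ((2 : ℝ) ^ (-a)) ^ 2 < 3 / 4 := by
    rw [← Real.rpow_mul_natCast zero_le_two, ← Real.lt_logb_iff_rpow_lt one_lt_two (by norm_num),
      ← inv_div, Real.logb_inv]
    push_cast
    linarith
  obtain ⟨D, b, hD, hb, h_ball⟩ := exists_eventually_le_ncard_zeroSumPairs (by positivity) hκ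
  let m (L : ℝ) : ℕ := ⌊γ * L⌋₊
  let k (L : ℝ) : ℕ := ⌊1 / (2 * a * D) * L⌋₊
  have hm : Tendsto (fun L => m L / L) atTop (𝓝 γ) := tendsto_nat_floor_mul_div_atTop hγ.le
  have hk : Tendsto (fun L => k L / L) atTop (𝓝 (1 / (2 * a * D))) :=
    tendsto_nat_floor_mul_div_atTop (by positivity)
  have hR : Tendsto (fun L => 2 ^ m L) atTop atTop :=
    (tendsto_pow_atTop_atTop_of_one_lt one_lt_two).comp <|
      (tendsto_nat_floor_atTop (α := ℝ)).comp <| tendsto_id.const_mul_atTop hγ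
  have h_levels := eventually_level_count_le hm hk (a := a * D) <| by
    field_simp; linarith
  have h_size := eventually_two_rpow_lt_pow hm hk (c := c) hb (D := D) <| by
    field_simp; linarith
  filter_upwards [hR.eventually h_ball, h_levels, h_size] with L h_ball h_levels h_size
  obtain ⟨B, hB_card, hB_norm, hB_pairs⟩ := h_ball
  rw [← Real.rpow_mul_natCast zero_le_two, neg_mul] at hB_pairs
  obtain ⟨G, hG, h_triangles, h_vertices⟩ := exists_edgeDisjointTriangles_sq_card_le
    posDef_sumSquares (by simpa [sumSquares_apply] using hB_norm) (by positivity) hB_pairs h_levels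
  refine ⟨#B ^ k L, G, hG, h_triangles, h_size.trans_le ?_, h_vertices⟩
  push_cast at hB_card ⊢
  gcongr

/-- Lower bound for the triangle removal lemma: with `C = 1/(4·log₂(4/3))`, for every
`c' < C` and all sufficiently small `ε > 0` there is an `n`-vertex graph with fewer than
`ε^(c'·log₂(1/ε)) · n³` triangles in which every edge set meeting all triangles has size
at least `ε·n²`. -/
theorem stmt_2 :
    ∀ c' : ℝ, 0 < c' → c' < 1 / (4 * Real.logb 2 (4 / 3)) →
      ∃ ε₀ : ℝ, 0 < ε₀ ∧ ∀ ε : ℝ, 0 < ε → ε < ε₀ →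
        ∃ (n : ℕ) (G : SimpleGraph (Fin n)), 0 < n ∧
          (({t : Finset (Fin n) | G.IsNClique 3 t}.ncard : ℝ)
              < ε ^ (c' * Real.logb 2 (1 / ε)) * (n : ℝ) ^ 3) ∧
          ∀ F : Set (Sym2 (Fin n)), F ⊆ G.edgeSet →
            (∀ t : Finset (Fin n), G.IsNClique 3 t →
              ∃ u ∈ t, ∃ v ∈ t, u ≠ v ∧ s(u, v) ∈ F) →
            ε * (n : ℝ) ^ 2 ≤ (F.ncard : ℝ) := by
  intro c hc hc_lt
  obtain ⟨L₀, h_graph⟩ := eventually_atTop.1 (eventually_exists_edgeDisjointTriangles hc hc_lt)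
  refine ⟨2 ^ (-L₀), by positivity, fun ε hε hε_lt => ?_⟩
  obtain ⟨L, hL, rfl⟩ := exists_lt_two_rpow_neg_eq hε hε_lt
  obtain ⟨V, G, hG, h_triangles, hV, h_vertices⟩ := h_graph L hL.le
  have hV_pos : (0 : ℝ) < V := hV.trans' (by positivity)
  refine ⟨3 * V, G, by exact_mod_cast mul_pos three_pos hV_pos, ?_, fun F _ hF => ?_⟩
  · calc ((G.cliqueSet 3).ncard : ℝ) ≤ V ^ 2 := mod_cast h_triangles
      _ < _ := mod_cast sq_lt_two_rpow_neg_rpow_mul_cube hV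
  · calc (2 : ℝ) ^ (-L) * (3 * V : ℕ) ^ 2 ≤ (G.cliqueSet 3).ncard := by
          rwa [Real.rpow_neg zero_le_two, inv_mul_le_iff₀ (by positivity)]
      _ ≤ F.ncard := mod_cast ncard_cliqueSet_three_le_of_hits hG hF
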